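/- If n is a non-negative integer such that 8n + 6 is divisible by 25, by 169, or by 61² = 3721, then n can be written as n = T_x + T_y + 4·T_z where x and y have different parity. -/

import Mathlib

/-- The `k`-th triangular number. -/
def T (k : ℕ) : ℕ := k * (k + 1) / 2

/-- Some properly represented value of a positive definite binary form `A x² + 2 B x y + C y²`
of determinant `D` is at most `√(4 D / 3)`. -/
theorem exists_binary_value_sq_le (D : ℤ) (hD : 0 < D) (A B C : ℤ) (hA : 0 < A)
    (hdet : A * C - B ^ 2 = D) :
    ∃ p q r s : ℤ, p * s - q * r = 1 ∧
      0 < A * p ^ 2 + 2 * B * p * r + C * r ^ 2 ∧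
      3 * (A * p ^ 2 + 2 * B * p * r + C * r ^ 2) ^ 2 ≤ 4 * D := by
  induction hk : A.toNat using Nat.strong_induction_on generalizing A B C with
  | _ k ih =>
    obtain ⟨t, ht₁, ht₂⟩ : ∃ t : ℤ, -A ≤ 2 * (B + t * A) ∧ 2 * (B + t * A) ≤ A := by
      refine ⟨-((2 * B + A) / (2 * A)), ?_, ?_⟩ <;>
        nlinarith [Int.emod_add_mul_ediv (2 * B + A) (2 * A),
          Int.emod_nonneg (2 * B + A) (by omega : 2 * A ≠ 0),
          Int.emod_lt_of_pos (2 * B + A) (by omega : 0 < 2 * A)]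
    have hdet' : A * (A * t ^ 2 + 2 * B * t + C) - (B + t * A) ^ 2 = D := by
      rw [← hdet]; ring
    have hC : 0 < A * t ^ 2 + 2 * B * t + C := by
      by_contra! hc
      nlinarith [sq_nonneg (B + t * A)]
    rcases lt_or_ge (A * t ^ 2 + 2 * B * t + C) A with hlt | hge
    · obtain ⟨p, q, r, s, h₁, h₂, h₃⟩ := ih (A * t ^ 2 + 2 * B * t + C).toNat (by omega)
        (A * t ^ 2 + 2 * B * t + C) (-(B + t * A)) A hC (by rw [← hdet']; ring) rfl
      have key : A * (t * p - r) ^ 2 + 2 * B * (t * p - r) * p + C * p ^ 2 =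
          (A * t ^ 2 + 2 * B * t + C) * p ^ 2 + 2 * -(B + t * A) * p * r + A * r ^ 2 := by ring
      refine ⟨t * p - r, t * q - s, p, q, by rw [← h₁]; ring, ?_, ?_⟩
      · rw [key]; exact h₂
      · rw [key]; exact h₃
    · refine ⟨1, 0, 0, 1, by norm_num, by simpa using hA, ?_⟩
      have hB : 4 * (B + t * A) ^ 2 ≤ A ^ 2 := by nlinarith
      nlinarith

/-- A positive definite integral binary form of determinant one represents only sums of two
squares. -/
theorem binary_det_one_eq_sq_add_sq (A B C : ℤ) (hA : 0 < A) (hdet : A * C - B ^ 2 = 1)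
    (y z : ℤ) :
    ∃ Y Z : ℤ, A * y ^ 2 + 2 * B * y * z + C * z ^ 2 = Y ^ 2 + Z ^ 2 := by
  obtain ⟨p, q, r, s, h₁, h₂, h₃⟩ := exists_binary_value_sq_le 1 one_pos A B C hA hdet
  have h1 : A * p ^ 2 + 2 * B * p * r + C * r ^ 2 = 1 := by nlinarith
  set B' := A * p * q + B * (p * s + q * r) + C * r * s with hB'
  set C' := A * q ^ 2 + 2 * B * q * s + C * s ^ 2 with hC'
  have hdet' : C' = B' ^ 2 + 1 := by
    have : (A * p ^ 2 + 2 * B * p * r + C * r ^ 2) * C' - B' ^ 2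
        = (A * C - B ^ 2) * (p * s - q * r) ^ 2 := by rw [hB', hC']; ring
    rw [h1, hdet, h₁] at this
    linarith
  refine ⟨(s * y - q * z) + B' * (p * z - r * y), p * z - r * y, ?_⟩
  have hsub : A * ((p * s - q * r) * y) ^ 2 +
      2 * B * ((p * s - q * r) * y) * ((p * s - q * r) * z) + C * ((p * s - q * r) * z) ^ 2 =
      (A * p ^ 2 + 2 * B * p * r + C * r ^ 2) * (s * y - q * z) ^ 2 +
      2 * B' * (s * y - q * z) * (p * z - r * y) + C' * (p * z - r * y) ^ 2 := by
    rw [hB', hC']; ring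
  rw [h₁, h1, hdet'] at hsub
  linear_combination hsub

/-- A positive definite integral ternary form of determinant one represents only sums of three
squares. -/
theorem ternary_det_one_eq_sum_three_sq (a b c f g h : ℤ) (ha : 0 < a) (hab : 0 < a * b - h ^ 2)
    (hdet : a * b * c + 2 * f * g * h - a * f ^ 2 - b * g ^ 2 - c * h ^ 2 = 1) (x y z : ℤ) :
    ∃ X Y Z : ℤ, a * x ^ 2 + b * y ^ 2 + c * z ^ 2 + 2 * f * y * z + 2 * g * x * z + 2 * h * x * y
      = X ^ 2 + Y ^ 2 + Z ^ 2 := by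
  induction hk : a.toNat using Nat.strong_induction_on generalizing a b c f g h x y z with
  | _ k ih =>
    rcases eq_or_lt_of_le (show 1 ≤ a from ha) with rfl | ha1
    · obtain ⟨Y, Z, hYZ⟩ := binary_det_one_eq_sq_add_sq (b - h ^ 2) (f - g * h) (c - g ^ 2)
        (by linarith) (by linear_combination hdet) y z
      exact ⟨x + h * y + g * z, Y, Z, by linear_combination hYZ⟩
    · obtain ⟨p, q, r, s, h₁, h₂, h₃⟩ := exists_binary_value_sq_le a ha (a * b - h ^ 2)
        (a * f - g * h) (a * c - g ^ 2) hab (by linear_combination a * hdet)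
      obtain ⟨t, ht₁, ht₂⟩ : ∃ t : ℤ, -a ≤ 2 * ((h * p + g * r) + t * a) ∧
          2 * ((h * p + g * r) + t * a) ≤ a := by
        refine ⟨-((2 * (h * p + g * r) + a) / (2 * a)), ?_, ?_⟩ <;>
          nlinarith [Int.emod_add_mul_ediv (2 * (h * p + g * r) + a) (2 * a),
            Int.emod_nonneg (2 * (h * p + g * r) + a) (by omega : 2 * a ≠ 0),
            Int.emod_lt_of_pos (2 * (h * p + g * r) + a) (by omega : 0 < 2 * a)]
      obtain ⟨h', hh'⟩ : ∃ h', h' = h * p + g * r + t * a := ⟨_, rfl⟩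
      obtain ⟨b', hb'⟩ : ∃ b', b' = a * t ^ 2 + b * p ^ 2 + c * r ^ 2 + 2 * f * p * r +
        2 * g * t * r + 2 * h * t * p := ⟨_, rfl⟩
      have hmin : a * b' - h' ^ 2 = (a * b - h ^ 2) * p ^ 2 + 2 * (a * f - g * h) * p * r +
          (a * c - g ^ 2) * r ^ 2 := by rw [hb', hh']; ring
      rw [← hmin] at h₂ h₃
      rw [← hh'] at ht₁ ht₂
      have hh4 : 4 * h' ^ 2 ≤ a ^ 2 := by nlinarith
      have hb0 : 0 < b' := by
        by_contra! hc
        nlinarith [sq_nonneg h']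
      have hlt : b' < a := by
        by_contra! hge
        have h4 : 3 * a ^ 2 ≤ 4 * (a * b' - h' ^ 2) := by nlinarith
        have h5 : (3 * a ^ 2) ^ 2 ≤ (4 * (a * b' - h' ^ 2)) ^ 2 :=
          pow_le_pow_left₀ (by positivity) h4 2
        have h6 : a * (27 * a ^ 3) ≤ a * 64 := by nlinarith
        have h7 : 27 * a ^ 3 ≤ 64 := le_of_mul_le_mul_left h6 ha
        have h8 : (2 : ℤ) ^ 3 ≤ a ^ 3 := pow_le_pow_left₀ (by norm_num) ha1 3
        omega
      -- the new basis is `(t, p, r)`, `(1, 0, 0)`, `(0, q, s)`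
      obtain ⟨X, Y, Z, hXYZ⟩ := ih b'.toNat (by omega) b' a
        (b * q ^ 2 + 2 * f * q * s + c * s ^ 2) (h * q + g * s)
        (t * (h * q + g * s) + b * p * q + f * (p * s + q * r) + c * r * s) h' hb0 (by linarith)
        (by
          rw [hb', hh']
          linear_combination (p * s - q * r) ^ 2 * hdet + (p * s - q * r + 1) * h₁)
        (s * y - q * z) (x - t * (s * y - q * z)) (p * z - r * y) rfl
      refine ⟨X, Y, Z, ?_⟩
      rw [← hXYZ, hb', hh']
      have e₁ : y = p * (s * y - q * z) + q * (p * z - r * y) := by linear_combination -y * h₁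
      have e₂ : z = r * (s * y - q * z) + s * (p * z - r * y) := by linear_combination -z * h₁
      generalize s * y - q * z = Y' at *
      generalize p * z - r * y = Z' at *
      rw [e₁, e₂]
      ring

theorem exists_prime_and_neg_isSquare (n : ℕ) (hn : n % 4 = 2) :
    ∃ p d : ℕ, p.Prime ∧ 0 < d ∧ p + 1 = d * n ∧ IsSquare ((-(d : ℤ) : ℤ) : ZMod p) := by
  have hcop : (n - 1).Coprime (4 * n) := by
    refine Nat.Coprime.mul_right ?_ ?_
    · exact Nat.Coprime.pow_right 2 (Nat.coprime_two_right.2 (Nat.odd_iff.2 (by omega)))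
    · have : (n - 1).Coprime (n - 1 + 1) := by simp
      rwa [Nat.sub_add_cancel (by omega)] at this
  obtain ⟨p, hp1, hp, hpm⟩ :=
    Nat.forall_exists_prime_gt_and_modEq n (by omega : 4 * n ≠ 0) hcop
  obtain ⟨v, hv⟩ := (Nat.modEq_iff_dvd' (by omega : n - 1 ≤ p)).1 hpm.symm
  have hpd : p + 1 = (4 * v + 1) * n := by
    have : p + 1 = 4 * n * v + n := by omega
    rw [this]; ring
  refine ⟨p, 4 * v + 1, hp, by omega, hpd, ?_⟩
  have := Fact.mk hp
  have hp4 : p % 4 = 1 := by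
    have : p + 1 = 4 * (n * v) + n := by rw [hpd]; ring
    omega
  have hd4 : (4 * v + 1) % 4 = 1 := by omega
  have hJ : jacobiSym (-((4 * v + 1 : ℕ) : ℤ)) p = 1 := by
    rw [neg_eq_neg_one_mul, jacobiSym.mul_left, jacobiSym.at_neg_one (Nat.odd_iff.2 (by omega)),
      ZMod.χ₄_nat_one_mod_four hp4, one_mul,
      jacobiSym.quadratic_reciprocity_one_mod_four hd4 (Nat.odd_iff.2 (by omega)),
      jacobiSym.mod_left' (a₂ := -1), jacobiSym.at_neg_one (Nat.odd_iff.2 (by omega)),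
      ZMod.χ₄_nat_one_mod_four hd4]
    refine Int.ModEq.symm ((Int.modEq_iff_dvd).2 ⟨n, ?_⟩)
    rw [sub_neg_eq_add]
    exact_mod_cast hpd
  exact ZMod.isSquare_of_jacobiSym_eq_one hJ

/-- Natural numbers congruent to `2` modulo `4` are sums of three squares. -/
theorem eq_sum_three_sq_of_mod_four_eq_two (n : ℕ) (hn : n % 4 = 2) :
    ∃ X Y Z : ℤ, (n : ℤ) = X ^ 2 + Y ^ 2 + Z ^ 2 := by
  obtain ⟨p, d, hp, hd, hpd, r, hr⟩ := exists_prime_and_neg_isSquare n hn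
  have := Fact.mk hp
  obtain ⟨s, rfl⟩ := ZMod.intCast_surjective r
  have hdvd : (p : ℤ) ∣ s ^ 2 + d := by
    rw [← ZMod.intCast_zmod_eq_zero_iff_dvd]
    push_cast at hr ⊢
    linear_combination -hr
  obtain ⟨t, ht⟩ := hdvd
  have hp0 : (0 : ℤ) < p := by exact_mod_cast hp.pos
  have hd0 : (0 : ℤ) < d := by exact_mod_cast hd
  have hpd' : (p : ℤ) + 1 = d * n := by exact_mod_cast hpd
  have ht0 : 0 < t := by
    by_contra! hc
    nlinarith [sq_nonneg s]
  obtain ⟨X, Y, Z, h⟩ := ternary_det_one_eq_sum_three_sq t p n 0 1 s ht0 (by linarith)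
    (by linear_combination -(n : ℤ) * ht - hpd') 0 0 1
  exact ⟨X, Y, Z, by rw [← h]; ring⟩

theorem Int.sq_emod_eight (a : ℤ) :
    (a % 2 = 1 ∧ a ^ 2 % 8 = 1) ∨ (a % 4 = 0 ∧ a ^ 2 % 8 = 0) ∨ (a % 4 = 2 ∧ a ^ 2 % 8 = 4) := by
  have h : a % 8 = 0 ∨ a % 8 = 1 ∨ a % 8 = 2 ∨ a % 8 = 3 ∨ a % 8 = 4 ∨ a % 8 = 5 ∨ a % 8 = 6 ∨
    a % 8 = 7 := by omega
  rcases h with h | h | h | h | h | h | h | h <;> simp [pow_two, Int.mul_emod, h] <;> omega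

theorem exists_sq_add_sq_add_two_mul_sq (m : ℕ) (hm : m % 4 = 3) :
    ∃ u v w : ℤ, 0 ≤ u ∧ 0 ≤ v ∧ 0 ≤ w ∧ u % 2 = 0 ∧ v % 2 = 1 ∧ w % 2 = 1 ∧
      (m : ℤ) = u ^ 2 + v ^ 2 + 2 * w ^ 2 := by
  have of_odd_odd (A B C : ℤ) (hA : A % 2 = 1) (hB : B % 2 = 1) (hC : C % 4 = 2)
      (h : (2 * m : ℤ) = A ^ 2 + B ^ 2 + C ^ 2) : ∃ u v w : ℤ, 0 ≤ u ∧ 0 ≤ v ∧ 0 ≤ w ∧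
      u % 2 = 0 ∧ v % 2 = 1 ∧ w % 2 = 1 ∧ (m : ℤ) = u ^ 2 + v ^ 2 + 2 * w ^ 2 := by
    obtain ⟨u, hu⟩ : ∃ u, A + B = 2 * u := ⟨(A + B) / 2, by omega⟩
    obtain ⟨v, hv⟩ : ∃ v, A - B = 2 * v := ⟨(A - B) / 2, by omega⟩
    obtain ⟨w, rfl⟩ : ∃ w, C = 2 * w := ⟨C / 2, by omega⟩
    obtain rfl : A = u + v := by omega
    obtain rfl : B = u - v := by omega
    have hm' : (m : ℤ) = u ^ 2 + v ^ 2 + 2 * w ^ 2 := by linarith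
    rcases Int.emod_two_eq_zero_or_one u with hu | hu
    · exact ⟨|u|, |v|, |w|, abs_nonneg _, abs_nonneg _, abs_nonneg _, by grind, by grind,
        by grind, by simpa only [sq_abs] using hm'⟩
    · exact ⟨|v|, |u|, |w|, abs_nonneg _, abs_nonneg _, abs_nonneg _, by grind, by grind,
        by grind, by simp only [sq_abs]; linarith⟩
  obtain ⟨A, B, C, h⟩ := eq_sum_three_sq_of_mod_four_eq_two (2 * m) (by omega)
  push_cast at h
  have hA := Int.sq_emod_eight A
  have hB := Int.sq_emod_eight B
  have hC := Int.sq_emod_eight C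
  have hcases : (A % 2 = 1 ∧ B % 2 = 1 ∧ C % 4 = 2) ∨ (A % 2 = 1 ∧ C % 2 = 1 ∧ B % 4 = 2) ∨
      (B % 2 = 1 ∧ C % 2 = 1 ∧ A % 4 = 2) := by omega
  rcases hcases with ⟨h₁, h₂, h₃⟩ | ⟨h₁, h₂, h₃⟩ | ⟨h₁, h₂, h₃⟩
  · exact of_odd_odd A B C h₁ h₂ h₃ h
  · exact of_odd_odd A C B h₁ h₂ h₃ (by linarith)
  · exact of_odd_odd B C A h₁ h₂ h₃ (by linarith)

theorem two_mul_T (k : ℕ) : 2 * T k = k * (k + 1) :=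
  Nat.mul_div_cancel' (Nat.even_mul_succ_self k).two_dvd

theorem exists_T_of_abs_lt (n : ℕ) (u v w : ℤ) (huv : |v| < u) (hw : 0 ≤ w) (hu2 : u % 2 = 0)
    (hv2 : v % 2 = 1) (hw2 : w % 2 = 1) (h : (4 * n + 3 : ℤ) = u ^ 2 + v ^ 2 + 2 * w ^ 2) :
    ∃ x y z : ℕ, n = T x + T y + 4 * T z ∧ x % 2 ≠ y % 2 := by
  obtain ⟨h₁, h₂⟩ := abs_lt.1 huv
  obtain ⟨x, hx⟩ : ∃ x : ℕ, u + v = 2 * x + 1 := ⟨((u + v - 1) / 2).toNat, by omega⟩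
  obtain ⟨y, hy⟩ : ∃ y : ℕ, u - v = 2 * y + 1 := ⟨((u - v - 1) / 2).toNat, by omega⟩
  obtain ⟨z, hz⟩ : ∃ z : ℕ, w = 2 * z + 1 := ⟨((w - 1) / 2).toNat, by omega⟩
  refine ⟨x, y, z, ?_, by omega⟩
  have hTx : (2 * T x : ℤ) = x * (x + 1) := by exact_mod_cast two_mul_T x
  have hTy : (2 * T y : ℤ) = y * (y + 1) := by exact_mod_cast two_mul_T y
  have hTz : (2 * T z : ℤ) = z * (z + 1) := by exact_mod_cast two_mul_T z
  obtain rfl : u = x + y + 1 := by omega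
  obtain rfl : v = x - y := by omega
  subst hz
  have : (n : ℤ) = T x + T y + 4 * T z := by linarith
  exact_mod_cast this

/-- A Pythagorean triple `e² + E² = q²` with `E > e` even lets one rotate a representation
`u² + v² + 2 w²` so that the even variable becomes the larger one. -/
theorem exists_T_of_sq_dvd (n : ℕ) (e E q : ℕ) (he : e % 2 = 1) (hE : E % 2 = 0) (heE : e < E)
    (hq : e ^ 2 + E ^ 2 = q ^ 2) (hdvd : q ^ 2 ∣ 8 * n + 6) :
    ∃ x y z : ℕ, n = T x + T y + 4 * T z ∧ x % 2 ≠ y % 2 := by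
  have hqodd : q % 2 = 1 := by
    have : (e ^ 2 + E ^ 2) % 2 = 1 := by simp [Nat.add_mod, Nat.pow_mod, he, hE]
    rw [hq] at this
    rcases Nat.mod_two_eq_zero_or_one q with h | h
    · simp [Nat.pow_mod, h] at this
    · exact h
  have hdvd' : q ^ 2 ∣ 4 * n + 3 := by
    refine Nat.Coprime.dvd_of_dvd_mul_left (m := 2) ?_
      (by rwa [show 2 * (4 * n + 3) = 8 * n + 6 by ring])
    exact Nat.Coprime.pow_left 2 (Nat.coprime_two_right.2 (Nat.odd_iff.2 hqodd))
  obtain ⟨m, hm⟩ := hdvd'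
  have hm4 : m % 4 = 3 := by
    have hq4 : q ^ 2 % 4 = 1 := by
      have : q % 4 = 1 ∨ q % 4 = 3 := by omega
      rcases this with h | h <;> simp [Nat.pow_mod, h]
    have : (q ^ 2 * m) % 4 = m % 4 := by rw [Nat.mul_mod, hq4]; simp
    omega
  obtain ⟨u, v, w, hu, hv, hw, hu2, hv2, hw2, huvw⟩ := exists_sq_add_sq_add_two_mul_sq m hm4
  have hm' : (4 * n + 3 : ℤ) = q ^ 2 * m := by exact_mod_cast hm
  have hq' : (e ^ 2 + E ^ 2 : ℤ) = q ^ 2 := by exact_mod_cast hq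
  have he2 : (e : ℤ) % 2 = 1 := by omega
  have hE2 : (E : ℤ) % 2 = 0 := by omega
  have hq2 : (q : ℤ) % 2 = 1 := by omega
  have heE' : (e : ℤ) < E := by exact_mod_cast heE
  have he0 : (0 : ℤ) < e := by omega
  have hq0 : (0 : ℤ) < q := by omega
  rcases lt_or_ge v u with hvu | hvu
  · refine exists_T_of_abs_lt n (q * u) (q * v) (q * w) ?_ (by positivity)
      (by simp [Int.mul_emod, hu2]) (by simp [Int.mul_emod, hv2, hq2])
      (by simp [Int.mul_emod, hw2, hq2]) (by rw [hm', huvw]; ring)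
    rw [abs_of_nonneg (by positivity)]
    exact mul_lt_mul_of_pos_left hvu hq0
  · have hlt : u < v := by omega
    refine exists_T_of_abs_lt n (e * u + E * v) (E * u - e * v) (q * w) ?_ (by positivity)
      (by simp [Int.add_emod, Int.mul_emod, hu2, hE2])
      (by simp [Int.sub_emod, Int.mul_emod, hv2, hE2, he2])
      (by simp [Int.mul_emod, hw2, hq2])
      (by rw [hm', huvw]; linear_combination (-(u ^ 2 + v ^ 2)) * hq')
    rw [abs_lt]
    constructor <;> nlinarith

theorem stmt_12 (n : ℕ)
    (h : 25 ∣ 8 * n + 6 ∨ 169 ∣ 8 * n + 6 ∨ 3721 ∣ 8 * n + 6) :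
    ∃ x y z : ℕ, n = T x + T y + 4 * T z ∧ x % 2 ≠ y % 2 := by
  rcases h with h | h | h
  · exact exists_T_of_sq_dvd n 3 4 5 rfl rfl (by norm_num) (by norm_num) h
  · exact exists_T_of_sq_dvd n 5 12 13 rfl rfl (by norm_num) (by norm_num) h
  · exact exists_T_of_sq_dvd n 11 60 61 rfl rfl (by norm_num) (by norm_num) h
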